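/- (Theorem 2, closed form of EMIN for pure states) Let n ≤ m, let (α_k)_{k∈Fin n} be an orthonormal basis of ℂ^n, (β_k)_{k∈Fin n} an orthonormal family in ℂ^m, λ : Fin n → ℝ with λ_k ≥ 0 and ∑_k λ_k = 1, and ψ := ∑_k √λ_k (α_k ⊗ β_k). Let H be an nm×nm Hermitian matrix admitting a decomposition H = ∑_l s_l (A_l ⊗ B_l) with s_l ∈ ℝ, A_l n×n matrices and B_l m×m matrices. Let Π be the measurement channel with projectors P_k := |α_k⟩⟨α_k|. Then ξ(|ψ⟩⟨ψ|,H) − ξ(Π(|ψ⟩⟨ψ|),H) = ∑_{i,j,l; i≠j} √(λ_i λ_j) s_l ⟨α_j, A_l α_i⟩ ⟨β_j, B_l β_i⟩ + ∑_{k=1}^{nm} ε_k^↑ μ_k^↓ − ε_min, where the (necessarily real) first sum runs over i ≠ j, μ^↓ is the nonincreasing rearrangement of λ padded with nm − n zeros, ε_1^↑ ≤ … ≤ ε_{nm}^↑ are the eigenvalues of H in nondecreasing order with multiplicity, and ε_min = ε_1^↑. -/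

import Mathlib

open scoped BigOperators ComplexOrder
open Matrix Kronecker

/-- Nondecreasing rearrangement of a finite real-valued family. -/
noncomputable def sortUp {ι : Type*} [Fintype ι] (f : ι → ℝ) : Fin (Fintype.card ι) → ℝ :=
  (f ∘ (Fintype.equivFin ι).symm) ∘ Tuple.sort (f ∘ (Fintype.equivFin ι).symm)

/-- Nonincreasing rearrangement of a finite real-valued family. -/
noncomputable def sortDown {ι : Type*} [Fintype ι] (f : ι → ℝ) : Fin (Fintype.card ι) → ℝ :=
  fun i => sortUp f i.rev

/-- Ergotropy ξ(ρ,H) = Tr(ρH) − inf over unitaries V of Tr(V ρ V* H). -/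
noncomputable def ergotropy {ι : Type*} [Fintype ι] [DecidableEq ι] (ρ H : Matrix ι ι ℂ) : ℝ :=
  ((ρ * H).trace).re -
    ⨅ V : Matrix.unitaryGroup ι ℂ,
      (((V : Matrix ι ι ℂ) * ρ * star (V : Matrix ι ι ℂ) * H).trace).re

/-- Passive energy E_p(ρ,H) = ∑ λ_i^↓ ε_i^↑. -/
noncomputable def passiveEnergy {ι : Type*} [Fintype ι] [DecidableEq ι]
    {ρ H : Matrix ι ι ℂ} (hρ : ρ.IsHermitian) (hH : H.IsHermitian) : ℝ :=
  ∑ i, sortDown hρ.eigenvalues i * sortUp hH.eigenvalues i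

/-- |u⟩⟨u|, the matrix with entries u_i conj(u_j). -/
noncomputable def ketbra {ι : Type*} (u : ι → ℂ) : Matrix ι ι ℂ := Matrix.vecMulVec u (star u)

/-- Tensor (Kronecker) product of vectors: (u ⊗ v)_(i,j) = u_i v_j. -/
noncomputable def vecTensor {ιa ιb : Type*} (u : ιa → ℂ) (v : ιb → ℂ) : ιa × ιb → ℂ :=
  fun p => u p.1 * v p.2

/-- The local measurement channel Π(ρ) = ∑_k (P_k ⊗ I) ρ (P_k ⊗ I). -/
noncomputable def pinch {ιa ιb K : Type*} [Fintype ιa] [Fintype ιb] [Fintype K]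
    [DecidableEq ιa] [DecidableEq ιb]
    (P : K → Matrix ιa ιa ℂ) (ρ : Matrix (ιa × ιb) (ιa × ιb) ℂ) :
    Matrix (ιa × ιb) (ιa × ιb) ℂ :=
  ∑ k, (P k ⊗ₖ (1 : Matrix ιb ιb ℂ)) * ρ * (P k ⊗ₖ (1 : Matrix ιb ιb ℂ))

/-- Local ergotropy ξ^l(ρ,H) = Tr(ρH) − inf over local unitaries U⊗V of Tr((U⊗V) ρ (U⊗V)* H). -/
noncomputable def localErgotropy {n m : ℕ}
    (ρ H : Matrix (Fin n × Fin m) (Fin n × Fin m) ℂ) : ℝ :=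
  ((ρ * H).trace).re -
    ⨅ W : Matrix.unitaryGroup (Fin n) ℂ × Matrix.unitaryGroup (Fin m) ℂ,
      ((((W.1 : Matrix (Fin n) (Fin n) ℂ) ⊗ₖ (W.2 : Matrix (Fin m) (Fin m) ℂ)) * ρ *
        star ((W.1 : Matrix (Fin n) (Fin n) ℂ) ⊗ₖ (W.2 : Matrix (Fin m) (Fin m) ℂ)) * H).trace).re

/-- First marginal (partial trace over the second factor). -/
noncomputable def marginalA {n m : ℕ} (ρ : Matrix (Fin n × Fin m) (Fin n × Fin m) ℂ) :
    Matrix (Fin n) (Fin n) ℂ :=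
  Matrix.of fun i i' => ∑ j, ρ (i, j) (i', j)

/-- Second marginal (partial trace over the first factor). -/
noncomputable def marginalB {n m : ℕ} (ρ : Matrix (Fin n × Fin m) (Fin n × Fin m) ℂ) :
    Matrix (Fin m) (Fin m) ℂ :=
  Matrix.of fun j j' => ∑ i, ρ (i, j) (i, j')

/-!
Writing `ρ = W diag(μ) W*` and `H = U diag(ε) U*`, the energy `Tr(V ρ V* H)` equals
`∑ q p, ε q * |Q q p|² * μ p` with `Q = U* V W`. The matrix `(|Q q p|²)` is doubly stochastic, so by
Birkhoff's theorem the infimum over `V` is attained at a permutation; by the rearrangement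
inequality it is `∑ k, ε_k^↑ μ_k^↓`. The orthonormality of `α_k ⊗ β_k` makes this applicable to the
pinched state with `μ` the padded `λ`. For the pure state `μ` is an indicator function, so only the
least eigenvalue survives. Pinching removes exactly the off-diagonal terms of
`⟨ψ, H ψ⟩ = ∑ i j, √(λ i λ j) ⟨α_j ⊗ β_j, H (α_i ⊗ β_i)⟩`, which gives the first sum.
-/

section Rearrangement

variable {ι : Type*} [Fintype ι]

lemma monotone_sortUp (f : ι → ℝ) : Monotone (sortUp f) :=
  Tuple.monotone_sort _

lemma antitone_sortDown (f : ι → ℝ) : Antitone (sortDown f) :=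
  (monotone_sortUp f).comp_antitone Fin.rev_anti

lemma exists_equiv_sortUp_eq_comp (f : ι → ℝ) :
    ∃ e : Fin (Fintype.card ι) ≃ ι, sortUp f = f ∘ e :=
  ⟨(Tuple.sort _).trans (Fintype.equivFin ι).symm, rfl⟩

lemma exists_equiv_sortDown_eq_comp (f : ι → ℝ) :
    ∃ e : Fin (Fintype.card ι) ≃ ι, sortDown f = f ∘ e :=
  have ⟨e, he⟩ := exists_equiv_sortUp_eq_comp f
  ⟨Fin.revPerm.trans e, funext fun i => congrFun he i.rev⟩

lemma isLeast_dotProduct_comp_perm_sort (ε μ : ι → ℝ) :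
    IsLeast (Set.range fun σ : Equiv.Perm ι => ε ⬝ᵥ (μ ∘ σ))
      (∑ k, sortUp ε k * sortDown μ k) := by
  obtain ⟨a, ha⟩ := exists_equiv_sortUp_eq_comp ε
  obtain ⟨b, hb⟩ := exists_equiv_sortDown_eq_comp μ
  have reindex (σ : Equiv.Perm ι) :
      ε ⬝ᵥ (μ ∘ σ) = ∑ k, sortUp ε k * sortDown μ ((a.trans (σ.trans b.symm)) k) := by
    simp [ha, hb, dotProduct, ← Equiv.sum_comp a]
  refine ⟨⟨a.symm.trans b, (reindex _).trans (by simp)⟩, ?_⟩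
  rintro _ ⟨σ, rfl⟩
  have anti : Antivary (sortUp ε) (sortDown μ) :=
    (monotone_sortUp ε).antivary (antitone_sortDown μ)
  exact anti.sum_mul_le_sum_mul_comp_perm.trans_eq (reindex σ).symm

lemma isLeast_dotProduct_comp_perm_single [DecidableEq ι] (ε : ι → ℝ) (p₀ : ι) :
    IsLeast (Set.range fun σ : Equiv.Perm ι => ε ⬝ᵥ (Pi.single p₀ 1 ∘ σ)) (⨅ p, ε p) := by
  have pairing (σ : Equiv.Perm ι) : ε ⬝ᵥ (Pi.single p₀ 1 ∘ σ) = ε (σ.symm p₀) := by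
    rw [← comp_equiv_symm_dotProduct]
    simp
  have : Nonempty ι := ⟨p₀⟩
  obtain ⟨p, hp⟩ := exists_eq_ciInf_of_finite (f := ε)
  refine ⟨⟨Equiv.swap p₀ p, by simp [pairing, hp]⟩, ?_⟩
  rintro _ ⟨σ, rfl⟩
  exact (ciInf_le (Set.finite_range ε).bddBelow _).trans_eq (pairing σ).symm

end Rearrangement

section Unitary

variable {ι : Type*} [DecidableEq ι]

lemma map_normSq_permMatrix (σ : Equiv.Perm ι) :
    (σ.permMatrix ℂ).map Complex.normSq = σ.permMatrix ℝ := by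
  ext i j
  simp [Equiv.Perm.permMatrix, PEquiv.toMatrix_apply, apply_ite Complex.normSq]

variable [Fintype ι]

lemma le_dotProduct_mulVec_of_mem_doublyStochastic {ε μ : ι → ℝ} {c : ℝ}
    (hc : ∀ σ : Equiv.Perm ι, c ≤ ε ⬝ᵥ (μ ∘ σ)) {M : Matrix ι ι ℝ}
    (hM : M ∈ doublyStochastic ℝ ι) : c ≤ ε ⬝ᵥ M *ᵥ μ := by
  have linear : IsLinearMap ℝ fun M : Matrix ι ι ℝ => ε ⬝ᵥ M *ᵥ μ :=
    ⟨fun M N => by rw [add_mulVec, dotProduct_add],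
      fun r M => by rw [smul_mulVec, dotProduct_smul]⟩
  rw [← SetLike.mem_coe, doublyStochastic_eq_convexHull_permMatrix] at hM
  refine convexHull_min ?_ (convex_halfSpace_ge linear c) hM
  rintro _ ⟨σ, rfl⟩
  simpa only [Set.mem_ofPred_eq, permMatrix_mulVec] using hc σ

lemma map_normSq_mem_doublyStochastic (U : unitaryGroup ι ℂ) :
    (U : Matrix ι ι ℂ).map Complex.normSq ∈ doublyStochastic ℝ ι := by
  refine mem_doublyStochastic_iff_sum.2 ⟨fun i j => Complex.normSq_nonneg _, fun i => ?_,
    fun j => ?_⟩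
  · have row := congrArg Complex.re (congrFun₂ (mem_unitaryGroup_iff.1 U.2) i i)
    simpa [mul_apply, Complex.normSq_apply] using row
  · have col := congrArg Complex.re (congrFun₂ (mem_unitaryGroup_iff'.1 U.2) j j)
    simpa [mul_apply, Complex.normSq_apply] using col

lemma re_trace_mul_diagonal_mul_star_mul_diagonal (Q : Matrix ι ι ℂ) (μ ε : ι → ℝ) :
    (Q * diagonal (fun p => (μ p : ℂ)) * star Q * diagonal (fun p => (ε p : ℂ))).trace.re
      = ε ⬝ᵥ Q.map Complex.normSq *ᵥ μ := by
  simp only [trace, diag_apply, mul_diagonal, dotProduct, mulVec, map_apply, Complex.re_sum]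
  refine Finset.sum_congr rfl fun q _ => ?_
  rw [Complex.re_mul_ofReal, mul_apply, Complex.re_sum, mul_comm]
  congr 1
  refine Finset.sum_congr rfl fun p _ => ?_
  simp only [mul_diagonal, star_apply, RCLike.star_def]
  rw [mul_right_comm, Complex.mul_conj, ← Complex.ofReal_mul, Complex.ofReal_re]

lemma permMatrix_mem_unitaryGroup (σ : Equiv.Perm ι) : σ.permMatrix ℂ ∈ unitaryGroup ι ℂ := by
  rw [mem_unitaryGroup_iff, star_eq_conjTranspose, conjTranspose_permMatrix, ← permMatrix_mul,
    inv_mul_cancel, permMatrix_one]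

lemma isLeast_dotProduct_map_normSq_mulVec {ε μ : ι → ℝ} {c : ℝ}
    (hc : IsLeast (Set.range fun σ : Equiv.Perm ι => ε ⬝ᵥ (μ ∘ σ)) c) :
    IsLeast (Set.range fun U : unitaryGroup ι ℂ =>
      ε ⬝ᵥ (U : Matrix ι ι ℂ).map Complex.normSq *ᵥ μ) c := by
  obtain ⟨⟨σ, hσ⟩, lower⟩ := hc
  refine ⟨⟨⟨σ.permMatrix ℂ, permMatrix_mem_unitaryGroup σ⟩, ?_⟩, ?_⟩
  · simpa only [map_normSq_permMatrix, permMatrix_mulVec] using hσ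
  · rintro _ ⟨U, rfl⟩
    exact le_dotProduct_mulVec_of_mem_doublyStochastic (fun τ => lower ⟨τ, rfl⟩)
      (map_normSq_mem_doublyStochastic U)

lemma eq_eigenvectorUnitary_mul_diagonal_mul_star {H : Matrix ι ι ℂ} (hH : H.IsHermitian) :
    H = (hH.eigenvectorUnitary : Matrix ι ι ℂ) * diagonal (fun p => (hH.eigenvalues p : ℂ)) *
      star (hH.eigenvectorUnitary : Matrix ι ι ℂ) :=
  hH.spectral_theorem.trans (Unitary.conjStarAlgAut_apply _ _)

lemma ergotropy_of_eq_mul_diagonal_mul_star {H : Matrix ι ι ℂ} (hH : H.IsHermitian)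
    (W : unitaryGroup ι ℂ) {μ : ι → ℝ} {c : ℝ}
    (hc : IsLeast (Set.range fun σ : Equiv.Perm ι => hH.eigenvalues ⬝ᵥ (μ ∘ σ)) c)
    {ρ : Matrix ι ι ℂ}
    (hρ : ρ = (W : Matrix ι ι ℂ) * diagonal (fun p => (μ p : ℂ)) * star (W : Matrix ι ι ℂ)) :
    ergotropy ρ H = (ρ * H).trace.re - c := by
  set U := hH.eigenvectorUnitary
  let rotate : unitaryGroup ι ℂ ≃ unitaryGroup ι ℂ :=
    (Equiv.mulRight W).trans (Equiv.mulLeft (star U))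
  have energy (V : unitaryGroup ι ℂ) :
      ((V : Matrix ι ι ℂ) * ρ * star (V : Matrix ι ι ℂ) * H).trace.re
        = hH.eigenvalues ⬝ᵥ (rotate V : Matrix ι ι ℂ).map Complex.normSq *ᵥ μ := by
    rw [← re_trace_mul_diagonal_mul_star_mul_diagonal, hρ]
    conv_lhs => rw [eq_eigenvectorUnitary_mul_diagonal_mul_star hH]
    rw [← Matrix.mul_assoc, ← Matrix.mul_assoc, trace_mul_comm]
    simp [rotate, U, Matrix.mul_assoc]
  have least := isLeast_dotProduct_map_normSq_mulVec hc
  rw [← rotate.surjective.range_comp] at least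
  simp only [ergotropy, energy]
  exact congrArg _ least.csInf_eq

end Unitary

section Ketbra

variable {ι κ : Type*}

lemma ketbra_smul (c : ℂ) (u : ι → ℂ) : ketbra (c • u) = (c * star c) • ketbra u := by
  rw [ketbra, ketbra, star_smul, smul_vecMulVec, vecMulVec_smul, smul_smul]

lemma isHermitian_ketbra (u : ι → ℂ) : (ketbra u).IsHermitian := by
  rw [IsHermitian, ketbra, conjTranspose_vecMulVec, star_star]

variable [Fintype ι]

lemma mul_ketbra_mul_conjTranspose (A : Matrix κ ι ℂ) (u : ι → ℂ) :
    A * ketbra u * Aᴴ = ketbra (A *ᵥ u) := by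
  rw [ketbra, ketbra, mul_vecMulVec, vecMulVec_mul, star_mulVec]

lemma trace_ketbra_mul (u : ι → ℂ) (H : Matrix ι ι ℂ) :
    (ketbra u * H).trace = star u ⬝ᵥ H *ᵥ u := by
  rw [ketbra, vecMulVec_mul, trace_vecMulVec, dotProduct_comm, dotProduct_mulVec]

lemma mul_diagonal_mul_star_eq_sum_ketbra [DecidableEq ι] (W : Matrix ι ι ℂ) (d : ι → ℂ) :
    W * diagonal d * star W = ∑ p, d p • ketbra (W.col p) := by
  ext i j
  rw [mul_apply]
  simp only [mul_diagonal, star_apply, Matrix.sum_apply, Matrix.smul_apply, ketbra,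
    vecMulVec_apply, Pi.star_apply, col_apply, smul_eq_mul]
  exact Finset.sum_congr rfl fun p _ => by ring

lemma star_sum_smul_dotProduct_sum_smul [Fintype κ] (c : κ → ℂ) (v w : κ → ι → ℂ) :
    star (∑ j, c j • v j) ⬝ᵥ ∑ i, c i • w i
      = ∑ i, ∑ j, c i * star (c j) * (star (v j) ⬝ᵥ w i) := by
  simp only [dotProduct_sum, star_sum, sum_dotProduct, star_smul, smul_dotProduct,
    dotProduct_smul, smul_eq_mul, mul_assoc, Finset.mul_sum]

variable [DecidableEq κ]

lemma orthonormal_toLp_iff {v : κ → ι → ℂ} :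
    Orthonormal ℂ (fun k => WithLp.toLp 2 (v k)) ↔
      ∀ k l, star (v k) ⬝ᵥ v l = if k = l then 1 else 0 := by
  simp only [orthonormal_iff_ite, EuclideanSpace.inner_toLp_toLp, dotProduct_comm]

lemma exists_unitary_col_eq [DecidableEq ι] {v : κ → ι → ℂ}
    (hv : ∀ k l, star (v k) ⬝ᵥ v l = if k = l then 1 else 0)
    {f : κ → ι} (hf : Function.Injective f) :
    ∃ W : unitaryGroup ι ℂ, ∀ k, (W : Matrix ι ι ℂ).col (f k) = v k := by
  let u : ι → EuclideanSpace ℂ ι := Function.extend f (fun k => WithLp.toLp 2 (v k)) 0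
  have hu (k : κ) : u (f k) = WithLp.toLp 2 (v k) := hf.extend_apply _ _ _
  have orthonormal : Orthonormal ℂ ((Set.range f).domRestrict u) := by
    have restrict : (Set.range f).domRestrict u
        = (fun k => WithLp.toLp 2 (v k)) ∘ (Equiv.ofInjective f hf).symm := by
      rw [Equiv.eq_comp_symm]
      exact funext hu
    rw [restrict]
    exact (orthonormal_toLp_iff.2 hv).comp _ (Equiv.injective _)
  obtain ⟨b, hb⟩ := orthonormal.exists_orthonormalBasis_extension_of_card_eq (by simp)
  let e := EuclideanSpace.basisFun ι ℂ
  refine ⟨⟨e.toBasis.toMatrix b, e.toMatrix_orthonormalBasis_mem_unitary b⟩, fun k => ?_⟩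
  ext i
  simp [e, Module.Basis.toMatrix_apply, hb, hu]

lemma ergotropy_sum_smul_ketbra [Fintype κ] [DecidableEq ι] {H : Matrix ι ι ℂ}
    (hH : H.IsHermitian) {v : κ → ι → ℂ}
    (hv : ∀ k l, star (v k) ⬝ᵥ v l = if k = l then 1 else 0)
    {f : κ → ι} (hf : Function.Injective f) {μ : ι → ℝ} (hμ : ∀ p, p ∉ Set.range f → μ p = 0)
    {c : ℝ} (hc : IsLeast (Set.range fun σ : Equiv.Perm ι => hH.eigenvalues ⬝ᵥ (μ ∘ σ)) c) :
    ergotropy (∑ k, (μ (f k) : ℂ) • ketbra (v k)) H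
      = ((∑ k, (μ (f k) : ℂ) • ketbra (v k)) * H).trace.re - c := by
  obtain ⟨W, hW⟩ := exists_unitary_col_eq hv hf
  refine ergotropy_of_eq_mul_diagonal_mul_star hH W hc ?_
  rw [mul_diagonal_mul_star_eq_sum_ketbra]
  refine Fintype.sum_of_injective f hf _ _ (fun p hp => ?_) fun k => ?_
  · rw [hμ p hp, Complex.ofReal_zero, zero_smul]
  · rw [hW]

lemma ergotropy_ketbra [DecidableEq ι] {H : Matrix ι ι ℂ} (hH : H.IsHermitian) {u : ι → ℂ}
    (hu : star u ⬝ᵥ u = 1) :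
    ergotropy (ketbra u) H = (ketbra u * H).trace.re - ⨅ p, hH.eigenvalues p := by
  obtain ⟨p₀⟩ : Nonempty ι := by
    by_contra! empty
    simp [dotProduct] at hu
  simpa using ergotropy_sum_smul_ketbra hH (v := fun _ : Unit => u) (f := fun _ => p₀)
    (fun _ _ => by simpa using hu) (Function.injective_of_subsingleton _)
    (fun p hp => Pi.single_eq_of_ne (fun h => hp ⟨(), h.symm⟩) 1)
    (isLeast_dotProduct_comp_perm_single hH.eigenvalues p₀)

lemma dotProduct_self_sum_smul [Fintype κ] (c : κ → ℂ) {v : κ → ι → ℂ}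
    (hv : ∀ k l, star (v k) ⬝ᵥ v l = if k = l then 1 else 0) :
    star (∑ k, c k • v k) ⬝ᵥ ∑ k, c k • v k = ∑ k, c k * star (c k) := by
  rw [star_sum_smul_dotProduct_sum_smul]
  simp [hv]

lemma trace_ketbra_sum_smul_mul_sub [Fintype κ] (c : κ → ℂ) (v : κ → ι → ℂ) (H : Matrix ι ι ℂ) :
    (ketbra (∑ k, c k • v k) * H).trace - ((∑ k, (c k * star (c k)) • ketbra (v k)) * H).trace
      = ∑ i, ∑ j, if i = j then 0 else c i * star (c j) * (star (v j) ⬝ᵥ H *ᵥ v i) := by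
  have diagonal_part : ((∑ k, (c k * star (c k)) • ketbra (v k)) * H).trace
      = ∑ i, ∑ j, if i = j then c i * star (c j) * (star (v j) ⬝ᵥ H *ᵥ v i) else 0 := by
    simp [Finset.sum_mul, trace_sum, trace_ketbra_mul]
  rw [diagonal_part, trace_ketbra_mul, mulVec_sum]
  simp only [mulVec_smul, star_sum_smul_dotProduct_sum_smul, ← Finset.sum_sub_distrib]
  refine Finset.sum_congr rfl fun i _ => Finset.sum_congr rfl fun j _ => ?_
  split_ifs
  exacts [sub_self _, sub_zero _]

end Ketbra

section Tensor

variable {ιa ιb κ : Type*} [Fintype ιa] [Fintype ιb]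

lemma star_vecTensor_dotProduct_vecTensor (a c : ιa → ℂ) (b d : ιb → ℂ) :
    star (vecTensor a b) ⬝ᵥ vecTensor c d = (star a ⬝ᵥ c) * (star b ⬝ᵥ d) := by
  simp only [dotProduct, vecTensor, Fintype.sum_prod_type, Finset.sum_mul_sum, Pi.star_apply,
    star_mul']
  exact Finset.sum_congr rfl fun i _ => Finset.sum_congr rfl fun j _ => mul_mul_mul_comm _ _ _ _

lemma kronecker_mulVec_vecTensor (A : Matrix ιa ιa ℂ) (B : Matrix ιb ιb ℂ) (a : ιa → ℂ)
    (b : ιb → ℂ) : (A ⊗ₖ B) *ᵥ vecTensor a b = vecTensor (A *ᵥ a) (B *ᵥ b) := by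
  ext ⟨i, j⟩
  simp only [mulVec, dotProduct, vecTensor, Fintype.sum_prod_type, Finset.sum_mul_sum,
    kroneckerMap_apply]
  exact Finset.sum_congr rfl fun i _ => Finset.sum_congr rfl fun j _ => mul_mul_mul_comm _ _ _ _

lemma star_vecTensor_dotProduct_sum_kronecker_mulVec {L : Type*} [Fintype L] (s : L → ℂ)
    (A : L → Matrix ιa ιa ℂ) (B : L → Matrix ιb ιb ℂ) (a c : ιa → ℂ) (b d : ιb → ℂ) :
    star (vecTensor a b) ⬝ᵥ (∑ l, s l • (A l ⊗ₖ B l)) *ᵥ vecTensor c d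
      = ∑ l, s l * ((star a ⬝ᵥ A l *ᵥ c) * (star b ⬝ᵥ B l *ᵥ d)) := by
  simp only [sum_mulVec, dotProduct_sum, smul_mulVec, dotProduct_smul, smul_eq_mul,
    kronecker_mulVec_vecTensor, star_vecTensor_dotProduct_vecTensor]

variable [DecidableEq κ]

lemma star_vecTensor_dotProduct_vecTensor_of_orthonormal {α : κ → ιa → ℂ} {β : κ → ιb → ℂ}
    (hα : ∀ k l, star (α k) ⬝ᵥ α l = if k = l then 1 else 0)
    (hβ : ∀ k l, star (β k) ⬝ᵥ β l = if k = l then 1 else 0) (k l : κ) :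
    star (vecTensor (α k) (β k)) ⬝ᵥ vecTensor (α l) (β l) = if k = l then 1 else 0 := by
  simp [star_vecTensor_dotProduct_vecTensor, hα, hβ]

variable [Fintype κ] [DecidableEq ιb]

lemma ketbra_kronecker_one_mulVec_sum {α : κ → ιa → ℂ}
    (hα : ∀ k l, star (α k) ⬝ᵥ α l = if k = l then 1 else 0)
    (β : κ → ιb → ℂ) (c : κ → ℂ) (k : κ) :
    (ketbra (α k) ⊗ₖ (1 : Matrix ιb ιb ℂ)) *ᵥ (∑ l, c l • vecTensor (α l) (β l))
      = c k • vecTensor (α k) (β k) := by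
  have project (l : κ) : (ketbra (α k) ⊗ₖ (1 : Matrix ιb ιb ℂ)) *ᵥ vecTensor (α l) (β l)
      = if k = l then vecTensor (α k) (β k) else 0 := by
    rw [kronecker_mulVec_vecTensor, one_mulVec, ketbra, vecMulVec_mulVec, hα]
    split_ifs with h
    · simp [h]
    · ext
      simp [vecTensor]
  simp [mulVec_sum, mulVec_smul, project]

lemma pinch_ketbra_sum_vecTensor [DecidableEq ιa] {α : κ → ιa → ℂ}
    (hα : ∀ k l, star (α k) ⬝ᵥ α l = if k = l then 1 else 0)
    (β : κ → ιb → ℂ) (c : κ → ℂ) :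
    pinch (fun k => ketbra (α k)) (ketbra (∑ k, c k • vecTensor (α k) (β k)))
      = ∑ k, (c k * star (c k)) • ketbra (vecTensor (α k) (β k)) := by
  refine Finset.sum_congr rfl fun k _ => ?_
  have hermitian : (ketbra (α k) ⊗ₖ (1 : Matrix ιb ιb ℂ)).IsHermitian := by
    rw [IsHermitian, conjTranspose_kronecker, (isHermitian_ketbra _).eq, conjTranspose_one]
  have project := mul_ketbra_mul_conjTranspose (ketbra (α k) ⊗ₖ (1 : Matrix ιb ιb ℂ))
    (∑ l, c l • vecTensor (α l) (β l))
  rwa [hermitian.eq, ketbra_kronecker_one_mulVec_sum hα, ketbra_smul] at project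

lemma trace_ketbra_mul_sub_trace_pinch_mul [DecidableEq ιa] {α : κ → ιa → ℂ}
    (hα : ∀ k l, star (α k) ⬝ᵥ α l = if k = l then 1 else 0) (β : κ → ιb → ℂ) (c : κ → ℂ)
    {L : Type*} [Fintype L] (s : L → ℂ) (A : L → Matrix ιa ιa ℂ) (B : L → Matrix ιb ιb ℂ) :
    (ketbra (∑ k, c k • vecTensor (α k) (β k)) * ∑ l, s l • (A l ⊗ₖ B l)).trace
        - (pinch (fun k => ketbra (α k)) (ketbra (∑ k, c k • vecTensor (α k) (β k)))
            * ∑ l, s l • (A l ⊗ₖ B l)).trace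
      = ∑ i, ∑ j, ∑ l, if i = j then 0 else
          c i * star (c j) * s l * (star (α j) ⬝ᵥ A l *ᵥ α i) * (star (β j) ⬝ᵥ B l *ᵥ β i) := by
  rw [pinch_ketbra_sum_vecTensor hα, trace_ketbra_sum_smul_mul_sub]
  simp only [star_vecTensor_dotProduct_sum_kronecker_mulVec, Finset.mul_sum, mul_assoc,
    Finset.sum_ite_irrel, Finset.sum_const_zero]

end Tensor

theorem emin_pure_state_closed_form_general {ιa ιb κ L : Type*} [Fintype ιa] [Fintype ιb]
    [Fintype κ] [Fintype L] [DecidableEq ιa] [DecidableEq ιb] [DecidableEq κ]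
    (α : κ → ιa → ℂ) (β : κ → ιb → ℂ)
    (hα : ∀ k l, star (α k) ⬝ᵥ α l = if k = l then 1 else 0)
    (hβ : ∀ k l, star (β k) ⬝ᵥ β l = if k = l then 1 else 0)
    (lam : κ → ℝ) (hlam : ∀ k, 0 ≤ lam k) (hsum : ∑ k, lam k = 1)
    (ψ : ιa × ιb → ℂ) (hψ : ψ = ∑ k, ((Real.sqrt (lam k) : ℝ) : ℂ) • vecTensor (α k) (β k))
    {H : Matrix (ιa × ιb) (ιa × ιb) ℂ} (hH : H.IsHermitian) (s : L → ℂ)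
    (A : L → Matrix ιa ιa ℂ) (B : L → Matrix ιb ιb ℂ) (hHdec : H = ∑ l, s l • (A l ⊗ₖ B l))
    (μ : ιa × ιb → ℝ) (f : κ → ιa × ιb) (hf : Function.Injective f)
    (hμf : ∀ k, μ (f k) = lam k) (hμ0 : ∀ p, p ∉ Set.range f → μ p = 0) :
    ergotropy (ketbra ψ) H - ergotropy (pinch (fun k => ketbra (α k)) (ketbra ψ)) H
      = (∑ i, ∑ j, ∑ l, if i = j then 0 else ((Real.sqrt (lam i * lam j) : ℝ) : ℂ) * s l *
              (star (α j) ⬝ᵥ A l *ᵥ α i) * (star (β j) ⬝ᵥ B l *ᵥ β i)).re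
        + ∑ k, sortUp hH.eigenvalues k * sortDown μ k - ⨅ p, hH.eigenvalues p := by
  let v (k : κ) : ιa × ιb → ℂ := vecTensor (α k) (β k)
  let c (k : κ) : ℂ := ((Real.sqrt (lam k) : ℝ) : ℂ)
  have hv := star_vecTensor_dotProduct_vecTensor_of_orthonormal hα hβ
  have weight (i j : κ) : c i * star (c j) = ((Real.sqrt (lam i * lam j) : ℝ) : ℂ) := by
    simp [c, Real.sqrt_mul (hlam i)]
  have weight_self (k : κ) : c k * star (c k) = μ (f k) := by
    rw [weight, Real.sqrt_mul_self (hlam k), hμf]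
  have unit : star ψ ⬝ᵥ ψ = 1 := by
    rw [hψ, dotProduct_self_sum_smul c hv]
    simp only [weight_self, hμf]
    exact_mod_cast hsum
  have pinched : pinch (fun k => ketbra (α k)) (ketbra ψ) = ∑ k, (μ (f k) : ℂ) • ketbra (v k) := by
    rw [hψ, pinch_ketbra_sum_vecTensor hα β c]
    simp only [weight_self, v]
  have coherence := trace_ketbra_mul_sub_trace_pinch_mul hα β c s A B
  rw [← hψ, ← hHdec, pinched] at coherence
  simp only [weight] at coherence
  rw [pinched, ergotropy_ketbra hH unit,
    ergotropy_sum_smul_ketbra hH hv hf hμ0 (isLeast_dotProduct_comp_perm_sort _ μ), ← coherence,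
    Complex.sub_re]
  ring

/-- Theorem 2 of the paper: closed form of EMIN for pure states. -/
theorem emin_pure_state_closed_form {n m : ℕ} (hnm : n ≤ m)
    (α : Fin n → Fin n → ℂ) (β : Fin n → Fin m → ℂ)
    (hα : ∀ k l, star (α k) ⬝ᵥ α l = if k = l then 1 else 0)
    (hβ : ∀ k l, star (β k) ⬝ᵥ β l = if k = l then 1 else 0)
    (lam : Fin n → ℝ) (hlam : ∀ k, 0 ≤ lam k) (hsum : ∑ k, lam k = 1)
    (ψ : Fin n × Fin m → ℂ)
    (hψ : ψ = ∑ k, ((Real.sqrt (lam k) : ℝ) : ℂ) • vecTensor (α k) (β k))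
    {H : Matrix (Fin n × Fin m) (Fin n × Fin m) ℂ} (hH : H.IsHermitian)
    {L : Type*} [Fintype L] (s : L → ℝ)
    (A : L → Matrix (Fin n) (Fin n) ℂ) (B : L → Matrix (Fin m) (Fin m) ℂ)
    (hHdec : H = ∑ l, ((s l : ℝ) : ℂ) • (A l ⊗ₖ B l))
    -- μ is λ padded with nm − n zeros:
    (μ : Fin n × Fin m → ℝ) (f : Fin n → Fin n × Fin m) (hf : Function.Injective f)
    (hμf : ∀ k, μ (f k) = lam k) (hμ0 : ∀ p, p ∉ Set.range f → μ p = 0) :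
    ergotropy (ketbra ψ) H - ergotropy (pinch (fun k => ketbra (α k)) (ketbra ψ)) H
      = (∑ i, ∑ j, ∑ l, if i = j then 0 else
            ((Real.sqrt (lam i * lam j) : ℝ) : ℂ) * ((s l : ℝ) : ℂ) *
              (star (α j) ⬝ᵥ (A l).mulVec (α i)) * (star (β j) ⬝ᵥ (B l).mulVec (β i))).re
        + ∑ k, sortUp hH.eigenvalues k * sortDown μ k
        - ⨅ p, hH.eigenvalues p :=
  emin_pure_state_closed_form_general α β hα hβ lam hlam hsum ψ hψ hH (fun l => (s l : ℂ)) A B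
    hHdec μ f hf hμf hμ0
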